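/- arXiv:0706.4411 — 2 statements merged into one kernel-verified Lean document; each statement's English description precedes it below -/
import Mathlib

section
/- Let H be a complex separable Hilbert space, (e_j)_{j≥1} an orthonormal basis, (λ_j)_{j≥1} a nondecreasing sequence of positive reals, L(t) a family of symmetric operators from H¹(Γ) to H, ε > 0, τ₀ ∈ ℝ, τ > 0, and φ₀ ∈ H¹(Γ). Let B : [0,∞) → [0,∞) be locally integrable·squared (B² locally integrable). Suppose φ^ε : [τ₀, τ₀+τ] → H is continuous with φ^ε(τ₀) = φ₀, and for each t ∈ (τ₀, τ₀+τ), φ^ε(t) ∈ H²(Γ) and φ^ε has derivative i·L(t)φ^ε(t) − ε·Γφ^ε(t) at t. Suppose φ⁰ : [τ₀, τ₀+τ] → H is continuous with φ⁰(τ₀) = φ₀, for each t ∈ (τ₀, τ₀+τ), φ⁰(t) ∈ H¹(Γ), φ⁰ has derivative i·L(t)φ⁰(t) at t, and ‖φ⁰(τ₀+s)‖₁ ≤ B(s)‖φ₀‖₁ for all s ∈ [0,τ]. Then ‖φ^ε(τ₀+τ) − φ⁰(τ₀+τ)‖² ≤ (ε/2)‖φ₀‖₁² ∫₀^τ B(t)²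 dt. -/
open scoped InnerProductSpace ENNReal
open MeasureTheory

/-- The (squared) homogeneous `H¹(Γ)` norm: `‖ψ‖₁² = Σ_j λ_j |⟨e_j, ψ⟩|² ∈ [0,∞]`. -/
noncomputable def H1normSq {H : Type*} [NormedAddCommGroup H] [InnerProductSpace ℂ H]
    (e : ℕ → H) (lam : ℕ → ℝ) (ψ : H) : ℝ≥0∞ :=
  ∑' j, ENNReal.ofReal (lam j * ‖⟪e j, ψ⟫_ℂ‖ ^ 2)

/-- `ψ ∈ H¹(Γ)`. -/
def MemH1 {H : Type*} [NormedAddCommGroup H] [InnerProductSpace ℂ H]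
    (e : ℕ → H) (lam : ℕ → ℝ) (ψ : H) : Prop :=
  H1normSq e lam ψ ≠ ⊤

/-- `ψ ∈ H²(Γ)`, i.e. `Σ_j λ_j² |⟨e_j, ψ⟩|² < ∞`. -/
def MemH2 {H : Type*} [NormedAddCommGroup H] [InnerProductSpace ℂ H]
    (e : ℕ → H) (lam : ℕ → ℝ) (ψ : H) : Prop :=
  (∑' j, ENNReal.ofReal ((lam j) ^ 2 * ‖⟪e j, ψ⟫_ℂ‖ ^ 2)) ≠ ⊤

/-- `Γψ = Σ_j λ_j ⟨e_j, ψ⟩ e_j` (defined as a `tsum`; meaningful for `ψ ∈ H²(Γ)`). -/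
noncomputable def Gam {H : Type*} [NormedAddCommGroup H] [InnerProductSpace ℂ H]
    [CompleteSpace H] (e : ℕ → H) (lam : ℕ → ℝ) (ψ : H) : H :=
  ∑' j, ((lam j : ℂ) * ⟪e j, ψ⟫_ℂ) • e j


section helpers
variable {H : Type*} [NormedAddCommGroup H] [InnerProductSpace ℂ H]

lemma aux_summable {f : ℕ → ℝ} (h0 : ∀ j, 0 ≤ f j) (h : (∑' j, ENNReal.ofReal (f j)) ≠ ⊤) :
    Summable f := by
  have := ENNReal.summable_toReal h
  refine this.congr fun j => ?_
  rw [ENNReal.toReal_ofReal (h0 j)]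

lemma aux_ne_top {f : ℕ → ℝ} (h : Summable f) :
    (∑' j, ENNReal.ofReal (f j)) ≠ ⊤ := h.tsum_ofReal_ne_top

lemma aux_toReal {f : ℕ → ℝ} (h0 : ∀ j, 0 ≤ f j) :
    (∑' j, ENNReal.ofReal (f j)).toReal = ∑' j, f j := by
  rw [ENNReal.tsum_toReal_eq (fun j => ENNReal.ofReal_ne_top)]
  exact tsum_congr fun j => ENNReal.toReal_ofReal (h0 j)

lemma aux_h1_summable (e : ℕ → H) (lam : ℕ → ℝ) (hl : ∀ j, 0 < lam j) (ψ : H)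
    (h : MemH1 e lam ψ) : Summable (fun j => lam j * ‖⟪e j, ψ⟫_ℂ‖ ^ 2) :=
  aux_summable (fun j => mul_nonneg (hl j).le (sq_nonneg _)) h

lemma aux_h2_summable (e : ℕ → H) (lam : ℕ → ℝ) (ψ : H)
    (h : MemH2 e lam ψ) : Summable (fun j => lam j ^ 2 * ‖⟪e j, ψ⟫_ℂ‖ ^ 2) :=
  aux_summable (fun j => mul_nonneg (sq_nonneg _) (sq_nonneg _)) h

lemma aux_h2_h1 (e : ℕ → H) (lam : ℕ → ℝ) (hl : ∀ j, 0 < lam j) (hm : Monotone lam) (ψ : H)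
    (h : MemH2 e lam ψ) : MemH1 e lam ψ := by
  apply aux_ne_top
  have := (aux_h2_summable e lam ψ h).mul_left (lam 0)⁻¹
  refine Summable.of_nonneg_of_le (fun j => mul_nonneg (hl j).le (sq_nonneg _)) (fun j => ?_) this
  rw [← mul_assoc]
  refine mul_le_mul_of_nonneg_right ?_ (sq_nonneg _)
  rw [inv_mul_eq_div, le_div_iff₀ (hl 0)]
  nlinarith [hm (Nat.zero_le j), hl j]

lemma aux_h1_sub (e : ℕ → H) (lam : ℕ → ℝ) (hl : ∀ j, 0 < lam j) (x y : H)
    (hx : MemH1 e lam x) (hy : MemH1 e lam y) : MemH1 e lam (x - y) := by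
  apply aux_ne_top
  have := ((aux_h1_summable e lam hl x hx).add (aux_h1_summable e lam hl y hy)).mul_left 2
  refine Summable.of_nonneg_of_le (fun j => mul_nonneg (hl j).le (sq_nonneg _)) (fun j => ?_) this
  rw [inner_sub_right]
  have h1 := norm_sub_le (⟪e j, x⟫_ℂ) (⟪e j, y⟫_ℂ)
  have h2 : ‖⟪e j, x⟫_ℂ - ⟪e j, y⟫_ℂ‖ ^ 2 ≤ 2 * (‖⟪e j, x⟫_ℂ‖ ^ 2 + ‖⟪e j, y⟫_ℂ‖ ^ 2) := by
    nlinarith [norm_nonneg (⟪e j, x⟫_ℂ - ⟪e j, y⟫_ℂ), sq_nonneg (‖⟪e j, x⟫_ℂ‖ - ‖⟪e j, y⟫_ℂ‖)]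
  nlinarith [mul_le_mul_of_nonneg_left h2 (hl j).le]

lemma aux_hasSum_Gam [CompleteSpace H] (e : HilbertBasis ℕ ℂ H) (lam : ℕ → ℝ) (ψ : H)
    (h : MemH2 (⇑e) lam ψ) :
    HasSum (fun j => ((lam j : ℂ) * ⟪e j, ψ⟫_ℂ) • e j) (Gam (⇑e) lam ψ) := by
  have hm : Memℓp (fun j => (lam j : ℂ) * ⟪e j, ψ⟫_ℂ) 2 := by
    apply memℓp_gen
    refine (aux_h2_summable _ lam ψ h).congr fun j => ?_
    simp [mul_pow]
  have := e.hasSum_repr_symm ⟨_, hm⟩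
  exact this.summable.hasSum

lemma aux_key [CompleteSpace H] (e : HilbertBasis ℕ ℂ H) (lam : ℕ → ℝ) (hl : ∀ j, 0 < lam j)
    (x y : H) (hx : MemH2 (⇑e) lam x) (hy : MemH1 (⇑e) lam y) :
    -(1 / 4) * (H1normSq (⇑e) lam y).toReal ≤ (⟪x - y, Gam (⇑e) lam x⟫_ℂ).re := by
  have h1 := (aux_hasSum_Gam e lam x hx).mapL (innerSL ℂ (x - y))
  have h2 := h1.mapL Complex.reCLM
  have h3 := ((aux_h1_summable (⇑e) lam hl y hy).hasSum).mul_left (-(1/4))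
  unfold H1normSq
  rw [aux_toReal (fun j => mul_nonneg (hl j).le (sq_nonneg _))]
  refine hasSum_le (fun j => ?_) h3 h2
  simp only [innerSL_apply_apply, inner_smul_right, Complex.reCLM_apply]
  rw [← inner_conj_symm (x - y) (e j), inner_sub_right]
  generalize ⟪e j, x⟫_ℂ = a
  generalize ⟪e j, y⟫_ℂ = b
  rw [← Complex.normSq_eq_norm_sq, Complex.normSq_apply]
  simp only [Complex.mul_re, Complex.mul_im, Complex.conj_re, Complex.conj_im, Complex.sub_re,
    Complex.sub_im, Complex.ofReal_re, Complex.ofReal_im]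
  have := mul_nonneg (hl j).le (add_nonneg (sq_nonneg (a.re - b.re / 2)) (sq_nonneg (a.im - b.im / 2)))
  nlinarith

end helpers

/-- Lemma `sdist`: comparison of the diffusive evolution with the free
evolution: `‖φ^ε(τ₀+τ) − φ⁰(τ₀+τ)‖² ≤ (ε/2)‖φ₀‖₁² ∫₀^τ B(t)² dt`. -/
theorem statement4 {H : Type*} [NormedAddCommGroup H] [InnerProductSpace ℂ H]
    [CompleteSpace H] [TopologicalSpace.SeparableSpace H]
    (e : HilbertBasis ℕ ℂ H) (lam : ℕ → ℝ)
    (hlam_pos : ∀ j, 0 < lam j) (hlam_mono : Monotone lam)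
    (L : ℝ → H →ₗ[ℂ] H)
    (hLsym : ∀ t : ℝ, ∀ x y : H, MemH1 (⇑e) lam x → MemH1 (⇑e) lam y →
      ⟪L t x, y⟫_ℂ = ⟪x, L t y⟫_ℂ)
    (ε : ℝ) (hε : 0 < ε) (τ₀ τ : ℝ) (hτ : 0 < τ)
    (φ₀ : H) (hφ₀ : MemH1 (⇑e) lam φ₀)
    (B : ℝ → ℝ) (hBnonneg : ∀ s, 0 ≤ B s)
    (hBsqloc : LocallyIntegrable (fun t => B t ^ 2) volume)
    (φε : ℝ → H)
    (hφεcont : ContinuousOn φε (Set.Icc τ₀ (τ₀ + τ))) (hφεinit : φε τ₀ = φ₀)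
    (hφεH2 : ∀ t ∈ Set.Ioo τ₀ (τ₀ + τ), MemH2 (⇑e) lam (φε t))
    (hφεderiv : ∀ t ∈ Set.Ioo τ₀ (τ₀ + τ),
      HasDerivAt φε (Complex.I • L t (φε t) - ε • Gam (⇑e) lam (φε t)) t)
    (φ0 : ℝ → H)
    (hφ0cont : ContinuousOn φ0 (Set.Icc τ₀ (τ₀ + τ))) (hφ0init : φ0 τ₀ = φ₀)
    (hφ0H1 : ∀ t ∈ Set.Ioo τ₀ (τ₀ + τ), MemH1 (⇑e) lam (φ0 t))
    (hφ0deriv : ∀ t ∈ Set.Ioo τ₀ (τ₀ + τ),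
      HasDerivAt φ0 (Complex.I • L t (φ0 t)) t)
    (hφ0bound : ∀ s ∈ Set.Icc (0 : ℝ) τ,
      H1normSq (⇑e) lam (φ0 (τ₀ + s)) ≤ ENNReal.ofReal (B s ^ 2) * H1normSq (⇑e) lam φ₀) :
    ‖φε (τ₀ + τ) - φ0 (τ₀ + τ)‖ ^ 2 ≤
      ε / 2 * (H1normSq (⇑e) lam φ₀).toReal * ∫ t in (0 : ℝ)..τ, B t ^ 2 := by
  set N := (H1normSq (⇑e) lam φ₀).toReal with hN
  have hmaps : ∀ s ∈ Set.Icc (0 : ℝ) τ, τ₀ + s ∈ Set.Icc τ₀ (τ₀ + τ) := fun s hs =>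
    ⟨by linarith [hs.1], by linarith [hs.2]⟩
  have hmaps' : ∀ s ∈ Set.Ioo (0 : ℝ) τ, τ₀ + s ∈ Set.Ioo τ₀ (τ₀ + τ) := fun s hs =>
    ⟨by linarith [hs.1], by linarith [hs.2]⟩
  let g : ℝ → ℝ := fun s => ‖φε (τ₀ + s) - φ0 (τ₀ + s)‖ ^ 2
  let d' : ℝ → H := fun t => (Complex.I • L t (φε t) - ε • Gam (⇑e) lam (φε t)) -
    Complex.I • L t (φ0 t)
  have hgcont : ContinuousOn g (Set.Icc 0 τ) := by
    have hc : ContinuousOn (fun s : ℝ => τ₀ + s) (Set.Icc 0 τ) := by fun_prop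
    exact (((hφεcont.comp hc hmaps).sub (hφ0cont.comp hc hmaps)).norm).pow 2
  have hgderiv : ∀ s ∈ Set.Ioo (0 : ℝ) τ,
      HasDerivAt g (2 * (⟪φε (τ₀ + s) - φ0 (τ₀ + s), d' (τ₀ + s)⟫_ℂ).re) s := by
    intro s hs
    have hd := ((hφεderiv _ (hmaps' s hs)).sub (hφ0deriv _ (hmaps' s hs))).comp_const_add τ₀ s
    letI : InnerProductSpace ℝ H := InnerProductSpace.rclikeToReal ℂ H
    exact hd.norm_sq
  have hbound : ∀ s ∈ Set.Ioo (0 : ℝ) τ,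
      2 * (⟪φε (τ₀ + s) - φ0 (τ₀ + s), d' (τ₀ + s)⟫_ℂ).re ≤ ε / 2 * N * B s ^ 2 := by
    intro s hs
    have ht := hmaps' s hs
    have hk := aux_key e lam hlam_pos _ _ (hφεH2 _ ht) (hφ0H1 _ ht)
    have hb := ENNReal.toReal_mono (ENNReal.mul_ne_top ENNReal.ofReal_ne_top hφ₀)
      (hφ0bound s ⟨hs.1.le, hs.2.le⟩)
    rw [ENNReal.toReal_mul, ENNReal.toReal_ofReal (sq_nonneg _), ← hN] at hb
    have hd1 := aux_h1_sub (⇑e) lam hlam_pos _ _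
      (aux_h2_h1 (⇑e) lam hlam_pos hlam_mono _ (hφεH2 _ ht)) (hφ0H1 _ ht)
    have hs1 := hLsym (τ₀ + s) _ _ hd1 hd1
    have hdd : d' (τ₀ + s) = Complex.I • L (τ₀ + s) (φε (τ₀ + s) - φ0 (τ₀ + s)) -
        (ε : ℂ) • Gam (⇑e) lam (φε (τ₀ + s)) := by
      simp only [d', map_sub, smul_sub, Complex.coe_smul]
      abel
    rw [hdd, inner_sub_right, inner_smul_right, inner_smul_right]
    rw [← inner_conj_symm] at hs1
    have him := Complex.conj_eq_iff_im.mp hs1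
    simp only [Complex.sub_re, Complex.mul_re, Complex.I_re, Complex.I_im, him,
      Complex.ofReal_re, Complex.ofReal_im]
    nlinarith [mul_le_mul_of_nonneg_left hk hε.le, mul_le_mul_of_nonneg_left hb hε.le]
  have hint : IntegrableOn (fun s => ε / 2 * N * B s ^ 2) (Set.Icc 0 τ) :=
    (hBsqloc.integrableOn_isCompact isCompact_Icc).const_mul _
  have := intervalIntegral.sub_le_integral_of_hasDeriv_right_of_le hτ.le hgcont
    (fun s hs => (hgderiv s hs).hasDerivWithinAt) hint hbound
  rw [intervalIntegral.integral_const_mul] at this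
  simpa [g, hφεinit, hφ0init] using this
end

section
/- Let H be a complex separable Hilbert space, (e_j)_{j≥1} an orthonormal basis, (λ_j)_{j≥1} a nondecreasing sequence of positive reals, L(t) a family of symmetric operators from H¹(Γ) to H, ε > 0, B₁ > 0, E ∈ ℝ, and ψ ∈ H¹(Γ) with ‖ψ‖ = 1. Suppose φ⁰ : [0,∞) → H is continuous with φ⁰(0) = ψ, for each t > 0, φ⁰(t) ∈ H¹(Γ), φ⁰ has derivative i·L(t)φ⁰(t) at t, and ‖φ⁰(t)‖₁ ≤ B₁‖ψ‖₁ for all t ≥ 0. Suppose φ^ε : [0,∞) → H is continuous with φ^ε(0) = ψ, and for each t > 0, φ^ε(t) ∈ H²(Γ) and φ^ε has derivative i·L(t)φ^ε(t) − ε·Γφ^ε(t) at t. Then for every τ ∈ (0, B₁^{−2}‖ψ‖₁^{−2}], one has |⟨φ^ε(τ/ε), φ⁰(τ/ε)⟩| ≥ 3/4 − (τ/2)B₁²‖ψ‖₁², and in particular ‖φ^ε(τ/ε)‖ ≥ 1/4. -/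
open scoped InnerProductSpace ENNReal
open MeasureTheory

theorem aux_summable_s11 {f : ℕ → ℝ} (hf : ∀ j, 0 ≤ f j)
    (h : (∑' j, ENNReal.ofReal (f j)) ≠ ⊤) : HasSum f (∑' j, ENNReal.ofReal (f j)).toReal := by
  have h1 := ENNReal.summable_toReal h
  have h2 : (fun x => (ENNReal.ofReal (f x)).toReal) = f := by
    ext x
    exact ENNReal.toReal_ofReal (hf x)
  rw [h2] at h1
  rw [← ENNReal.ofReal_tsum_of_nonneg hf h1, ENNReal.toReal_ofReal (tsum_nonneg hf)]
  exact h1.hasSum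

theorem aux_H1_hasSum {H : Type*} [NormedAddCommGroup H] [InnerProductSpace ℂ H]
    (e : ℕ → H) (lam : ℕ → ℝ) (hlam_pos : ∀ j, 0 < lam j) (x : H) (hx : MemH1 e lam x) :
    HasSum (fun j => lam j * ‖⟪e j, x⟫_ℂ‖ ^ 2) (H1normSq e lam x).toReal := by
  refine aux_summable_s11 (fun j => ?_) hx
  have := hlam_pos j
  positivity

theorem aux_H2_H1 {H : Type*} [NormedAddCommGroup H] [InnerProductSpace ℂ H]
    (e : ℕ → H) (lam : ℕ → ℝ) (hlam_pos : ∀ j, 0 < lam j) (hlam_mono : Monotone lam)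
    (x : H) (hx : MemH2 e lam x) : MemH1 e lam x := by
  have h2 := (aux_summable_s11 (fun j => by positivity) hx).summable
  have h1 : Summable (fun j => lam j * ‖⟪e j, x⟫_ℂ‖ ^ 2) := by
    refine Summable.of_nonneg_of_le (fun j => ?_) (fun j => ?_) (h2.mul_left (lam 0)⁻¹)
    · have := hlam_pos j
      positivity
    · have h0 := hlam_pos 0
      have hj : lam 0 ≤ lam j := hlam_mono (Nat.zero_le j)
      rw [← div_eq_inv_mul, le_div_iff₀ h0]
      have : 0 ≤ lam j * ‖⟪e j, x⟫_ℂ‖ ^ 2 := by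
        have := hlam_pos j
        positivity
      nlinarith
  unfold MemH1 H1normSq
  exact h1.tsum_ofReal_ne_top

theorem aux_Gam_coeff {H : Type*} [NormedAddCommGroup H] [InnerProductSpace ℂ H]
    [CompleteSpace H] (e : HilbertBasis ℕ ℂ H) (lam : ℕ → ℝ)
    (x : H) (hx : MemH2 (⇑e) lam x) (j : ℕ) :
    ⟪e j, Gam (⇑e) lam x⟫_ℂ = (lam j : ℂ) * ⟪e j, x⟫_ℂ := by
  have h2 := (aux_summable_s11 (fun j => by positivity) hx).summable
  have hm : Memℓp (fun j => (lam j : ℂ) * ⟪e j, x⟫_ℂ) 2 := by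
    apply memℓp_gen
    simpa [mul_pow] using h2
  have hs := e.hasSum_repr_symm ⟨_, hm⟩
  have hG : Gam (⇑e) lam x = e.repr.symm ⟨_, hm⟩ := hs.tsum_eq
  rw [hG, ← e.repr_apply_apply, LinearIsometryEquiv.apply_symm_apply]

theorem aux_Gam_inner {H : Type*} [NormedAddCommGroup H] [InnerProductSpace ℂ H]
    [CompleteSpace H] (e : HilbertBasis ℕ ℂ H) (lam : ℕ → ℝ)
    (x y : H) (hx : MemH2 (⇑e) lam x) :
    HasSum (fun j => lam j * (⟪x, e j⟫_ℂ * ⟪e j, y⟫_ℂ).re) (⟪Gam (⇑e) lam x, y⟫_ℂ).re := by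
  have h := Complex.hasSum_re (e.hasSum_inner_mul_inner (Gam (⇑e) lam x) y)
  convert h using 2 with j
  rw [← inner_conj_symm (Gam (⇑e) lam x) (e j), aux_Gam_coeff e lam x hx j, map_mul,
    inner_conj_symm, Complex.conj_ofReal, mul_assoc, Complex.re_ofReal_mul]

theorem aux_Gam_self {H : Type*} [NormedAddCommGroup H] [InnerProductSpace ℂ H]
    [CompleteSpace H] (e : HilbertBasis ℕ ℂ H) (lam : ℕ → ℝ) (hlam_pos : ∀ j, 0 < lam j)
    (x : H) (hx : MemH2 (⇑e) lam x) (hx1 : MemH1 (⇑e) lam x) :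
    (⟪Gam (⇑e) lam x, x⟫_ℂ).re = (H1normSq (⇑e) lam x).toReal := by
  refine (aux_Gam_inner e lam x x hx).unique ?_
  convert aux_H1_hasSum (⇑e) lam hlam_pos x hx1 using 3 with j
  have h := inner_mul_symm_re_eq_norm (𝕜 := ℂ) x (e j)
  rw [norm_mul, norm_inner_symm x (e j), ← sq] at h
  exact h

theorem aux_Gam_le {H : Type*} [NormedAddCommGroup H] [InnerProductSpace ℂ H]
    [CompleteSpace H] (e : HilbertBasis ℕ ℂ H) (lam : ℕ → ℝ) (hlam_pos : ∀ j, 0 < lam j)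
    (x y : H) (hx : MemH2 (⇑e) lam x) (hx1 : MemH1 (⇑e) lam x) (hy : MemH1 (⇑e) lam y) :
    (⟪Gam (⇑e) lam x, y⟫_ℂ).re ≤
      ((H1normSq (⇑e) lam x).toReal + (H1normSq (⇑e) lam y).toReal) / 2 := by
  refine hasSum_le (fun j => ?_) (aux_Gam_inner e lam x y hx)
    (((aux_H1_hasSum (⇑e) lam hlam_pos x hx1).add
      (aux_H1_hasSum (⇑e) lam hlam_pos y hy)).div_const 2)
  have h1 : (⟪x, e j⟫_ℂ * ⟪e j, y⟫_ℂ).re ≤ ‖⟪e j, x⟫_ℂ‖ * ‖⟪e j, y⟫_ℂ‖ := by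
    refine (Complex.re_le_norm _).trans ?_
    rw [norm_mul, norm_inner_symm x (e j)]
  have h2 : (⟪x, e j⟫_ℂ * ⟪e j, y⟫_ℂ).re ≤ (‖⟪e j, x⟫_ℂ‖ ^ 2 + ‖⟪e j, y⟫_ℂ‖ ^ 2) / 2 := by
    nlinarith [sq_nonneg (‖⟪e j, x⟫_ℂ‖ - ‖⟪e j, y⟫_ℂ‖)]
  nlinarith [mul_le_mul_of_nonneg_left h2 (hlam_pos j).le]

theorem aux_mono {f f' : ℝ → ℝ} (hc : ContinuousOn f (Set.Ici 0))
    (hd : ∀ t, 0 < t → HasDerivAt f (f' t) t) (hn : ∀ t, 0 < t → 0 ≤ f' t) (T : ℝ)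
    (hT : 0 ≤ T) : f 0 ≤ f T := by
  have h : MonotoneOn f (Set.Ici 0) := by
    refine monotoneOn_of_deriv_nonneg (convex_Ici 0) hc ?_ ?_
    · intro t ht
      rw [interior_Ici] at ht
      exact (hd t ht).differentiableAt.differentiableWithinAt
    · intro t ht
      rw [interior_Ici] at ht
      rw [(hd t ht).deriv]
      exact hn t ht
  exact h Set.self_mem_Ici hT hT

theorem aux_re_deriv {f : ℝ → ℂ} {f' : ℂ} {t : ℝ} (h : HasDerivAt f f' t) :
    HasDerivAt (fun s => (f s).re) f'.re t :=
  Complex.reCLM.hasFDerivAt.comp_hasDerivAt t h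

/-- quantitative necessity direction of Theorem `main`: if the free evolution
`φ⁰` of a unit vector `ψ ∈ H¹(Γ)` keeps its `H¹(Γ)`-norm bounded by `B₁‖ψ‖₁` (as happens
when `ψ` is an `H¹(Γ)` eigenfunction of the period operator, `Vψ = e^{iE}ψ`), then for
`τ ≤ B₁⁻²‖ψ‖₁⁻²` the diffusive solution satisfies
`|⟨φ^ε(τ/ε), φ⁰(τ/ε)⟩| ≥ 3/4 − (τ/2)B₁²‖ψ‖₁²` and in particular `‖φ^ε(τ/ε)‖ ≥ 1/4`. -/
theorem statement11 {H : Type*} [NormedAddCommGroup H] [InnerProductSpace ℂ H]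
    [CompleteSpace H] [TopologicalSpace.SeparableSpace H]
    (e : HilbertBasis ℕ ℂ H) (lam : ℕ → ℝ)
    (hlam_pos : ∀ j, 0 < lam j) (hlam_mono : Monotone lam)
    (L : ℝ → H →ₗ[ℂ] H)
    (hLsym : ∀ t : ℝ, ∀ x y : H, MemH1 (⇑e) lam x → MemH1 (⇑e) lam y →
      ⟪L t x, y⟫_ℂ = ⟪x, L t y⟫_ℂ)
    (ε : ℝ) (hε : 0 < ε) (B₁ : ℝ) (hB₁ : 0 < B₁) (E : ℝ)
    (ψ : H) (hψH1 : MemH1 (⇑e) lam ψ) (hψnorm : ‖ψ‖ = 1)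
    (φ0 : ℝ → H)
    (hφ0cont : ContinuousOn φ0 (Set.Ici (0 : ℝ))) (hφ0init : φ0 0 = ψ)
    (hφ0H1 : ∀ t : ℝ, 0 < t → MemH1 (⇑e) lam (φ0 t))
    (hφ0deriv : ∀ t : ℝ, 0 < t → HasDerivAt φ0 (Complex.I • L t (φ0 t)) t)
    (hφ0bound : ∀ t : ℝ, 0 ≤ t →
      H1normSq (⇑e) lam (φ0 t) ≤ ENNReal.ofReal (B₁ ^ 2) * H1normSq (⇑e) lam ψ)
    (φε : ℝ → H)
    (hφεcont : ContinuousOn φε (Set.Ici (0 : ℝ))) (hφεinit : φε 0 = ψ)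
    (hφεH2 : ∀ t : ℝ, 0 < t → MemH2 (⇑e) lam (φε t))
    (hφεderiv : ∀ t : ℝ, 0 < t →
      HasDerivAt φε (Complex.I • L t (φε t) - ε • Gam (⇑e) lam (φε t)) t) :
    ∀ τ : ℝ, 0 < τ → τ ≤ (B₁ ^ 2 * (H1normSq (⇑e) lam ψ).toReal)⁻¹ →
      3 / 4 - τ / 2 * B₁ ^ 2 * (H1normSq (⇑e) lam ψ).toReal ≤
        ‖⟪φε (τ / ε), φ0 (τ / ε)⟫_ℂ‖ ∧
      1 / 4 ≤ ‖φε (τ / ε)‖ := by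
  intro τ hτ hτle
  set N := (H1normSq (⇑e) lam ψ).toReal with hN
  have hNnn : 0 ≤ N := ENNReal.toReal_nonneg
  have hT : 0 ≤ τ / ε := by positivity
  have hH1 : ∀ t, 0 < t → MemH1 (⇑e) lam (φε t) := fun t ht =>
    aux_H2_H1 _ lam hlam_pos hlam_mono _ (hφεH2 t ht)
  have hbd : ∀ t, 0 < t → (H1normSq (⇑e) lam (φ0 t)).toReal ≤ B₁ ^ 2 * N := by
    intro t ht
    have h := ENNReal.toReal_mono (ENNReal.mul_ne_top ENNReal.ofReal_ne_top hψH1)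
      (hφ0bound t ht.le)
    rwa [ENNReal.toReal_mul, ENNReal.toReal_ofReal (by positivity)] at h
  have hψψ : (⟪ψ, ψ⟫_ℂ).re = 1 := by
    rw [inner_self_eq_norm_sq_to_K, hψnorm]
    simp
  have hself : ∀ x : H, (⟪x, x⟫_ℂ).re = ‖x‖ ^ 2 := by
    intro x
    rw [inner_self_eq_norm_sq_to_K]
    norm_cast
  have hcre : ∀ f g : ℝ → H, ContinuousOn f (Set.Ici 0) → ContinuousOn g (Set.Ici 0) →
      ContinuousOn (fun t => (⟪f t, g t⟫_ℂ).re) (Set.Ici 0) := fun f g hf hg =>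
    Complex.continuous_re.comp_continuousOn (ContinuousOn.inner (𝕜 := ℂ) hf hg)
  -- the free evolution does not increase the norm
  have hnorm0 : ‖φ0 (τ / ε)‖ ≤ 1 := by
    have h := aux_mono (f := fun t => -(⟪φ0 t, φ0 t⟫_ℂ).re) (f' := fun _ => 0)
      (hcre _ _ hφ0cont hφ0cont).neg ?_ (fun _ _ => le_rfl) (τ / ε) hT
    · simp only [hφ0init, hψψ, hself] at h
      nlinarith [norm_nonneg (φ0 (τ / ε))]
    · intro t ht
      refine (aux_re_deriv ((hφ0deriv t ht).inner ℂ (hφ0deriv t ht))).neg.congr_deriv ?_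
      rw [inner_smul_left, inner_smul_right, hLsym t _ _ (hφ0H1 t ht) (hφ0H1 t ht)]
      simp
  have hD1 : ∀ t, 0 < t → HasDerivAt (fun t => (⟪φε t, φ0 t⟫_ℂ).re)
      (-ε * (⟪Gam (⇑e) lam (φε t), φ0 t⟫_ℂ).re) t := by
    intro t ht
    convert aux_re_deriv ((hφεderiv t ht).inner ℂ (hφ0deriv t ht)) using 1
    rw [inner_sub_left, inner_smul_left, inner_smul_right,
      RCLike.real_smul_eq_coe_smul (K := ℂ) ε, inner_smul_left,
      hLsym t _ _ (hH1 t ht) (hφ0H1 t ht)]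
    simp
    ring
  have hD2 : ∀ t, 0 < t → HasDerivAt (fun t => (⟪φε t, φε t⟫_ℂ).re)
      (-2 * ε * (⟪Gam (⇑e) lam (φε t), φε t⟫_ℂ).re) t := by
    intro t ht
    convert aux_re_deriv ((hφεderiv t ht).inner ℂ (hφεderiv t ht)) using 1
    have hs : (⟪φε t, Gam (⇑e) lam (φε t)⟫_ℂ).re = (⟪Gam (⇑e) lam (φε t), φε t⟫_ℂ).re :=
      inner_re_symm (𝕜 := ℂ) _ _
    rw [inner_sub_left, inner_sub_right, inner_smul_left, inner_smul_right,
      RCLike.real_smul_eq_coe_smul (K := ℂ) ε, inner_smul_left, inner_smul_right,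
      hLsym t _ _ (hH1 t ht) (hH1 t ht)]
    simp [hs]
    ring
  have hkey := aux_mono
    (f := fun t => (⟪φε t, φ0 t⟫_ℂ).re - 1 / 4 * (⟪φε t, φε t⟫_ℂ).re + (ε * (B₁ ^ 2 * N) / 2) * t)
    (f' := fun t => -ε * (⟪Gam (⇑e) lam (φε t), φ0 t⟫_ℂ).re
      - 1 / 4 * (-2 * ε * (⟪Gam (⇑e) lam (φε t), φε t⟫_ℂ).re) + (ε * (B₁ ^ 2 * N) / 2) * 1)
    (((hcre _ _ hφεcont hφ0cont).sub (continuousOn_const.mul (hcre _ _ hφεcont hφεcont))).add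
      (continuousOn_const.mul continuousOn_id))
    (fun t ht => ((hD1 t ht).sub ((hD2 t ht).const_mul (1 / 4))).add
      ((hasDerivAt_id t).const_mul _))
    (by
      intro t ht
      have h1 := aux_Gam_le e lam hlam_pos _ _ (hφεH2 t ht) (hH1 t ht) (hφ0H1 t ht)
      have h2 := aux_Gam_self e lam hlam_pos _ (hφεH2 t ht) (hH1 t ht)
      have h3 := hbd t ht
      rw [h2]
      nlinarith)
    (τ / ε) hT
  have hεT : ε * (B₁ ^ 2 * N) / 2 * (τ / ε) = τ / 2 * B₁ ^ 2 * N := by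
    field_simp
  simp only [hφ0init, hφεinit, hψψ, hεT, hself (φε (τ / ε))] at hkey
  have hfirst : 3 / 4 - τ / 2 * B₁ ^ 2 * N ≤ ‖⟪φε (τ / ε), φ0 (τ / ε)⟫_ℂ‖ := by
    refine le_trans ?_ (Complex.re_le_norm _)
    nlinarith [sq_nonneg ‖φε (τ / ε)‖]
  refine ⟨hfirst, ?_⟩
  have hpos : 0 < B₁ ^ 2 * N := inv_pos.mp (hτ.trans_le hτle)
  have hτ1 : τ * (B₁ ^ 2 * N) ≤ 1 := by
    rwa [← le_div_iff₀ hpos, one_div]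
  have hcs : ‖⟪φε (τ / ε), φ0 (τ / ε)⟫_ℂ‖ ≤ ‖φε (τ / ε)‖ * ‖φ0 (τ / ε)‖ := norm_inner_le_norm _ _
  have hle : ‖φε (τ / ε)‖ * ‖φ0 (τ / ε)‖ ≤ ‖φε (τ / ε)‖ :=
    mul_le_of_le_one_right (norm_nonneg _) hnorm0
  nlinarith
end
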